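/- Let X and A be finite nonempty sets, n ∈ ℕ, and let S_{x,a} ∈ Mₙ(ℂ) for x ∈ X, a ∈ A. Then the supremum of ‖Σ_{x∈X,a∈A} S_{x,a} ⊗ U_{a,x}‖, taken over all pairs of complex Hilbert spaces (H,K) and all block operator isometries U = (U_{a,x}) over (X,A) with entries in B(H,K) (the norm being that of an operator from ℂⁿ ⊗ H to ℂⁿ ⊗ K), equals the supremum of ‖Σ_{x∈X,a∈A} S_{x,a} ⊗ T_{a,x}‖, taken over all pairs of complex Hilbert spaces (H,K) and all families T = (T_{a,x}) of operators T_{a,x} ∈ B(H,K) whose block operator matrix, viewed as an operator from the X-fold direct sum of H to the A-fold direct sum of K, is a contraction. -/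

import Mathlib

open ContinuousLinearMap

universe u

/-- A bundled complex Hilbert space. -/
structure HilbertC : Type (u + 1) where
  carrier : Type u
  [nacg : NormedAddCommGroup carrier]
  [ips : InnerProductSpace ℂ carrier]
  [cs : CompleteSpace carrier]

attribute [instance] HilbertC.nacg HilbertC.ips HilbertC.cs

/-- The block operator `ι`-fold `H` → `κ`-fold `K` (Hilbert direct sums)
associated with a family `T : κ → ι → B(H,K)` of operators. -/
noncomputable def blockCLM {ι κ : Type*} [Fintype ι] [Fintype κ] [DecidableEq κ]
    {H K : Type*} [NormedAddCommGroup H] [InnerProductSpace ℂ H]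
    [NormedAddCommGroup K] [InnerProductSpace ℂ K]
    (T : κ → ι → (H →L[ℂ] K)) :
    PiLp 2 (fun _ : ι => H) →L[ℂ] PiLp 2 (fun _ : κ => K) :=
  ∑ a : κ, ∑ x : ι,
    ((PiLp.continuousLinearEquiv 2 ℂ (fun _ : κ => K)).symm.toContinuousLinearMap.comp
      ((ContinuousLinearMap.pi (fun b : κ =>
          if b = a then ContinuousLinearMap.id ℂ K else 0)).comp
        ((T a x).comp
          ((ContinuousLinearMap.proj x).comp
            (PiLp.continuousLinearEquiv 2 ℂ (fun _ : ι => H)).toContinuousLinearMap))))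

/-!
A block operator isometry is a block operator contraction, so only `≥` needs an argument. The block
operator `T` of a contraction has a defect operator `D` with `T* T + D* D = 1`. Appending `D` to
one of the rows of `T` enlarges `K` to `K ⊕ H^X` and produces a block operator isometry `U` whose
entries compress to those of `T` under the projection `K ⊕ H^X → K`. As compression does not
increase the norm, `‖∑ S_{x,a} ⊗ T_{a,x}‖ ≤ ‖∑ S_{x,a} ⊗ U_{a,x}‖`.
-/

theorem norm_fstL_le_one {𝕜 E F : Type*} [NontriviallyNormedField 𝕜]
    [SeminormedAddCommGroup E] [NormedSpace 𝕜 E] [SeminormedAddCommGroup F] [NormedSpace 𝕜 F]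
    (p : ENNReal) [Fact (1 ≤ p)] : ‖WithLp.fstL p 𝕜 E F‖ ≤ 1 :=
  opNorm_le_bound _ zero_le_one fun v => by simpa using WithLp.norm_fst_le E v

section BlockOperators

variable {ι κ μ H K L : Type*} [Fintype ι] [Fintype κ] [Fintype μ]
  [NormedAddCommGroup H] [InnerProductSpace ℂ H]
  [NormedAddCommGroup K] [InnerProductSpace ℂ K]
  [NormedAddCommGroup L] [InnerProductSpace ℂ L]

theorem blockCLM_apply [DecidableEq κ] (T : κ → ι → (H →L[ℂ] K)) (f : PiLp 2 (fun _ : ι => H))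
    (a : κ) : blockCLM T f a = ∑ x, T a x (f x) := by
  simp only [blockCLM, sum_apply, WithLp.ofLp_sum, Finset.sum_apply]
  rw [Finset.sum_eq_single_of_mem a (Finset.mem_univ a)]
  · simp
  · intro b _ hba
    simp [hba.symm]

theorem blockCLM_single_apply [DecidableEq ι] [DecidableEq κ] (T : κ → ι → (H →L[ℂ] K)) (x : ι)
    (h : H) (a : κ) : blockCLM T (PiLp.single 2 x h) a = T a x h := by
  rw [blockCLM_apply, Finset.sum_eq_single_of_mem x (Finset.mem_univ x)]
  · simp
  · intro y _ hyx
    simp [hyx]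

theorem blockCLM_injective [DecidableEq κ] :
    Function.Injective (blockCLM : (κ → ι → (H →L[ℂ] K)) → _) := by
  classical
  intro S T hST
  ext a x h
  rw [← blockCLM_single_apply S, ← blockCLM_single_apply T, hST]

theorem blockCLM_comp_blockCLM [DecidableEq κ] [DecidableEq μ] (S : μ → κ → (K →L[ℂ] L))
    (T : κ → ι → (H →L[ℂ] K)) :
    blockCLM S ∘L blockCLM T = blockCLM (fun i x => ∑ a, S i a ∘L T a x) := by
  ext f i
  simp only [comp_apply, blockCLM_apply, map_sum, sum_apply]
  exact Finset.sum_comm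

theorem blockCLM_one [DecidableEq ι] :
    blockCLM (fun x x' : ι => if x = x' then (1 : H →L[ℂ] H) else 0) = 1 := by
  ext f x
  rw [blockCLM_apply, Finset.sum_eq_single_of_mem x (Finset.mem_univ x)]
  · simp
  · intro y _ hyx
    simp [hyx.symm]

theorem adjoint_blockCLM [DecidableEq ι] [DecidableEq κ] [CompleteSpace H] [CompleteSpace K]
    (T : κ → ι → (H →L[ℂ] K)) :
    adjoint (blockCLM T) = blockCLM (fun x a => adjoint (T a x)) := by
  refine ((eq_adjoint_iff _ _).mpr fun g f => ?_).symm
  simp only [PiLp.inner_apply, blockCLM_apply, sum_inner, inner_sum, adjoint_inner_left]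
  exact Finset.sum_comm

theorem norm_blockCLM_comp_le [DecidableEq κ] (P : K →L[ℂ] L) (T : κ → ι → (H →L[ℂ] K)) :
    ‖blockCLM (fun a x => P ∘L T a x)‖ ≤ ‖P‖ * ‖blockCLM T‖ := by
  refine opNorm_le_bound _ (by positivity) fun f => ?_
  have apply_eq (a : κ) : blockCLM (fun a x => P ∘L T a x) f a = P (blockCLM T f a) := by
    simp only [blockCLM_apply, comp_apply, map_sum]
  have norm_le : ‖blockCLM (fun a x => P ∘L T a x) f‖ ≤ ‖P‖ * ‖blockCLM T f‖ := by
    refine le_of_sq_le_sq ?_ (by positivity)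
    rw [mul_pow, PiLp.norm_sq_eq_of_L2, PiLp.norm_sq_eq_of_L2, Finset.mul_sum]
    gcongr with a
    rw [apply_eq, ← mul_pow]
    gcongr
    exact P.le_opNorm _
  calc ‖blockCLM (fun a x => P ∘L T a x) f‖ ≤ ‖P‖ * ‖blockCLM T f‖ := norm_le
    _ ≤ ‖P‖ * (‖blockCLM T‖ * ‖f‖) := by gcongr; exact (blockCLM T).le_opNorm f
    _ = ‖P‖ * ‖blockCLM T‖ * ‖f‖ := (mul_assoc _ _ _).symm

end BlockOperators

section BlockIsometries

variable {ι κ H K : Type*} [Fintype ι] [Fintype κ] [DecidableEq ι]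
  [NormedAddCommGroup H] [InnerProductSpace ℂ H] [CompleteSpace H]
  [NormedAddCommGroup K] [InnerProductSpace ℂ K] [CompleteSpace K]

/-- `U` is a block operator isometry, expressed as the orthonormality relations between the columns
of its block matrix. -/
def IsBlockIsometry (U : κ → ι → (H →L[ℂ] K)) : Prop :=
  ∀ x x' : ι, ∑ a : κ, adjoint (U a x) ∘L U a x' = if x = x' then 1 else 0

theorem isBlockIsometry_iff_norm_map [DecidableEq κ] (U : κ → ι → (H →L[ℂ] K)) :
    IsBlockIsometry U ↔ ∀ f, ‖blockCLM U f‖ = ‖f‖ := by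
  rw [norm_map_iff_adjoint_comp_self, adjoint_blockCLM, blockCLM_comp_blockCLM, ← blockCLM_one,
    blockCLM_injective.eq_iff]
  simp only [IsBlockIsometry, funext_iff]

theorem IsBlockIsometry.norm_blockCLM_le_one [DecidableEq κ] {U : κ → ι → (H →L[ℂ] K)}
    (hU : IsBlockIsometry U) : ‖blockCLM U‖ ≤ 1 := by
  refine opNorm_le_bound _ zero_le_one fun f => ?_
  rw [(isBlockIsometry_iff_norm_map U).mp hU, one_mul]

end BlockIsometries

section DefectOperator

variable {E F : Type*} [NormedAddCommGroup E] [InnerProductSpace ℂ E] [CompleteSpace E]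
  [NormedAddCommGroup F] [InnerProductSpace ℂ F] [CompleteSpace F]

theorem exists_adjoint_comp_self_add_eq_one {T : E →L[ℂ] F} (hT : ‖T‖ ≤ 1) :
    ∃ D : E →L[ℂ] E, adjoint T ∘L T + adjoint D ∘L D = 1 := by
  have gram_nonneg : 0 ≤ adjoint T ∘L T :=
    (nonneg_iff_isPositive _).mpr (isPositive_adjoint_comp_self T)
  have gram_le_one : adjoint T ∘L T ≤ 1 := by
    rw [← CStarAlgebra.norm_le_one_iff_of_nonneg _ gram_nonneg, norm_adjoint_comp_self]
    exact mul_le_one₀ hT (norm_nonneg T) hT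
  obtain ⟨D, hD⟩ := CStarAlgebra.nonneg_iff_eq_star_mul_self.mp (sub_nonneg.mpr gram_le_one)
  exact ⟨D, (sub_eq_iff_eq_add'.mp hD).symm⟩

theorem exists_norm_sq_add_norm_sq_eq {T : E →L[ℂ] F} (hT : ‖T‖ ≤ 1) :
    ∃ D : E →L[ℂ] E, ∀ f, ‖T f‖ ^ 2 + ‖D f‖ ^ 2 = ‖f‖ ^ 2 := by
  obtain ⟨D, hD⟩ := exists_adjoint_comp_self_add_eq_one hT
  refine ⟨D, fun f => ?_⟩
  rw [apply_norm_sq_eq_inner_adjoint_left, apply_norm_sq_eq_inner_adjoint_left, ← map_add,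
    ← inner_add_left, ← add_apply, hD, one_apply_eq_self, inner_self_eq_norm_sq]

end DefectOperator

section Dilation

variable {ι κ H K L : Type*} [DecidableEq ι]
  [NormedAddCommGroup H] [InnerProductSpace ℂ H]
  [NormedAddCommGroup K] [InnerProductSpace ℂ K]
  [NormedAddCommGroup L] [InnerProductSpace ℂ L]

/-- The `x`-th column of an operator on a direct sum, that is, its restriction to the `x`-th
summand. -/
noncomputable def blockColumn (D : PiLp 2 (fun _ : ι => H) →L[ℂ] L) (x : ι) : H →L[ℂ] L :=
  D ∘L (PiLp.continuousLinearEquiv 2 ℂ (fun _ : ι => H)).symm ∘L single ℂ (fun _ : ι => H) x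

theorem sum_blockColumn_apply [Fintype ι] (D : PiLp 2 (fun _ : ι => H) →L[ℂ] L)
    (f : PiLp 2 (fun _ : ι => H)) : ∑ x, blockColumn D x (f x) = D f :=
  sum_comp_single ℂ (fun _ : ι => H)
    (D ∘L (PiLp.continuousLinearEquiv 2 ℂ (fun _ : ι => H)).symm) f.ofLp

/-- The family obtained from `T` by enlarging the codomain `K` to `K ⊕ L` and placing the columns
of `D` next to the row `a₀` of `T`; all the other rows get `0` in the new summand. -/
noncomputable def appendToRow [DecidableEq κ] (T : κ → ι → (H →L[ℂ] K))
    (D : PiLp 2 (fun _ : ι => H) →L[ℂ] L) (a₀ : κ) :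
    κ → ι → (H →L[ℂ] WithLp 2 (K × L)) := fun a x =>
  (WithLp.prodContinuousLinearEquiv 2 ℂ K L).symm ∘L
    (T a x).prod (if a = a₀ then blockColumn D x else 0)

theorem fstL_comp_appendToRow [DecidableEq κ] (T : κ → ι → (H →L[ℂ] K))
    (D : PiLp 2 (fun _ : ι => H) →L[ℂ] L) (a₀ a : κ) (x : ι) :
    WithLp.fstL 2 ℂ K L ∘L appendToRow T D a₀ a x = T a x :=
  rfl

variable [Fintype ι] [Fintype κ] [DecidableEq κ]

theorem blockCLM_appendToRow_apply (T : κ → ι → (H →L[ℂ] K))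
    (D : PiLp 2 (fun _ : ι => H) →L[ℂ] L) (a₀ a : κ) (f : PiLp 2 (fun _ : ι => H)) :
    blockCLM (appendToRow T D a₀) f a =
      WithLp.toLp 2 (blockCLM T f a, if a = a₀ then D f else 0) := by
  rw [blockCLM_apply, blockCLM_apply, ← sum_blockColumn_apply D]
  refine WithLp.ofLp_injective 2 (Prod.ext ?_ ?_)
  · simp [appendToRow, WithLp.ofLp_sum, Prod.fst_sum]
  · by_cases h : a = a₀ <;> simp [appendToRow, WithLp.ofLp_sum, Prod.snd_sum, h]

theorem norm_sq_blockCLM_appendToRow (T : κ → ι → (H →L[ℂ] K))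
    (D : PiLp 2 (fun _ : ι => H) →L[ℂ] L) (a₀ : κ) (f : PiLp 2 (fun _ : ι => H)) :
    ‖blockCLM (appendToRow T D a₀) f‖ ^ 2 = ‖blockCLM T f‖ ^ 2 + ‖D f‖ ^ 2 := by
  have norm_sq_ite (a : κ) :
      ‖if a = a₀ then D f else 0‖ ^ 2 = if a = a₀ then ‖D f‖ ^ 2 else 0 := by
    split_ifs <;> simp
  simp only [PiLp.norm_sq_eq_of_L2, blockCLM_appendToRow_apply, WithLp.prod_norm_sq_eq_of_L2,
    WithLp.toLp_fst, WithLp.toLp_snd, norm_sq_ite, Finset.sum_add_distrib, Finset.sum_ite_eq',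
    Finset.mem_univ, if_true]

theorem exists_isBlockIsometry_fstL_comp_eq [Nonempty κ] [CompleteSpace H] [CompleteSpace K]
    {T : κ → ι → (H →L[ℂ] K)} (hT : ‖blockCLM T‖ ≤ 1) :
    ∃ U : κ → ι → (H →L[ℂ] WithLp 2 (K × PiLp 2 (fun _ : ι => H))),
      IsBlockIsometry U ∧ ∀ a x, WithLp.fstL 2 ℂ K _ ∘L U a x = T a x := by
  obtain ⟨D, hD⟩ := exists_norm_sq_add_norm_sq_eq hT
  let a₀ : κ := Classical.arbitrary κ
  refine ⟨appendToRow T D a₀, ?_, fstL_comp_appendToRow T D a₀⟩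
  rw [isBlockIsometry_iff_norm_map]
  intro f
  rw [← sq_eq_sq₀ (norm_nonneg _) (norm_nonneg _), norm_sq_blockCLM_appendToRow, hD]

end Dilation

section Amplification

variable {X A m p H K L : Type*} [Fintype X] [Fintype A] [Fintype m] [Fintype p] [DecidableEq m]
  [NormedAddCommGroup H] [InnerProductSpace ℂ H]
  [NormedAddCommGroup K] [InnerProductSpace ℂ K]
  [NormedAddCommGroup L] [InnerProductSpace ℂ L]

/-- The operator `∑ S_{x,a} ⊗ T_{a,x}`, with `ℂᵖ ⊗ H` and `ℂᵐ ⊗ K` realised as the direct sums of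
`p` copies of `H` and of `m` copies of `K`. -/
noncomputable def tensorSum (S : X → A → Matrix m p ℂ) (T : A → X → (H →L[ℂ] K)) :
    PiLp 2 (fun _ : p => H) →L[ℂ] PiLp 2 (fun _ : m => K) :=
  blockCLM fun i j => ∑ x : X, ∑ a : A, S x a i j • T a x

theorem norm_tensorSum_comp_le (S : X → A → Matrix m p ℂ) (P : K →L[ℂ] L)
    (T : A → X → (H →L[ℂ] K)) :
    ‖tensorSum S fun a x => P ∘L T a x‖ ≤ ‖P‖ * ‖tensorSum S T‖ := by
  simpa only [tensorSum, comp_finsetSum, comp_smul] using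
    norm_blockCLM_comp_le P fun i j => ∑ x : X, ∑ a : A, S x a i j • T a x

theorem exists_isBlockIsometry_norm_tensorSum_le [DecidableEq X] [DecidableEq A] [Nonempty A]
    [CompleteSpace H] [CompleteSpace K] (S : X → A → Matrix m p ℂ) {T : A → X → (H →L[ℂ] K)}
    (hT : ‖blockCLM T‖ ≤ 1) :
    ∃ U : A → X → (H →L[ℂ] WithLp 2 (K × PiLp 2 (fun _ : X => H))),
      IsBlockIsometry U ∧ ‖tensorSum S T‖ ≤ ‖tensorSum S U‖ := by
  obtain ⟨U, hU, hUT⟩ := exists_isBlockIsometry_fstL_comp_eq hT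
  refine ⟨U, hU, ?_⟩
  calc ‖tensorSum S T‖
      = ‖tensorSum S fun a x => WithLp.fstL 2 ℂ K _ ∘L U a x‖ := by simp only [hUT]
    _ ≤ ‖WithLp.fstL 2 ℂ K (PiLp 2 fun _ : X => H)‖ * ‖tensorSum S U‖ :=
        norm_tensorSum_comp_le S _ U
    _ ≤ ‖tensorSum S U‖ := mul_le_of_le_one_left (opNorm_nonneg _) (norm_fstL_le_one 2)

end Amplification

theorem statement6_general.{v}
    {X : Type v} {A m p : Type*} [Fintype X] [Fintype A] [Fintype m] [Fintype p] [Nonempty A]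
    [DecidableEq X] [DecidableEq A] [DecidableEq m] (S : X → A → Matrix m p ℂ) :
    sSup {r : ℝ | ∃ (ℍ 𝕂 : HilbertC.{max u v}) (U : A → X → (ℍ.carrier →L[ℂ] 𝕂.carrier)),
        IsBlockIsometry U ∧ r = ‖tensorSum S U‖}
    = sSup {r : ℝ | ∃ (ℍ 𝕂 : HilbertC.{max u v}) (T : A → X → (ℍ.carrier →L[ℂ] 𝕂.carrier)),
        ‖blockCLM T‖ ≤ 1 ∧ r = ‖tensorSum S T‖} := by
  apply csSup_eq_csSup_of_forall_exists_le
  · rintro _ ⟨ℍ, 𝕂, U, hU, rfl⟩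
    exact ⟨_, ⟨ℍ, 𝕂, U, hU.norm_blockCLM_le_one, rfl⟩, le_rfl⟩
  · rintro _ ⟨ℍ, 𝕂, T, hT, rfl⟩
    obtain ⟨U, hU, hTU⟩ := exists_isBlockIsometry_norm_tensorSum_le S hT
    exact ⟨_, ⟨ℍ, ⟨WithLp 2 (𝕂.carrier × PiLp 2 fun _ : X => ℍ.carrier)⟩, U, hU, rfl⟩, hTU⟩

/-- The supremum of `‖Σ S_{x,a} ⊗ U_{a,x}‖` over all block operator
isometries `U` equals the supremum over all block operator contractions `T`. -/
theorem statement6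
    {X A : Type} [Fintype X] [Fintype A] [Nonempty X] [Nonempty A]
    [DecidableEq X] [DecidableEq A]
    (n : ℕ) (S : X → A → Matrix (Fin n) (Fin n) ℂ) :
    sSup {r : ℝ | ∃ (ℍ 𝕂 : HilbertC.{u})
        (U : A → X → (ℍ.carrier →L[ℂ] 𝕂.carrier)),
        (∀ x x' : X, ∑ a : A, (adjoint (U a x)) ∘L (U a x')
            = if x = x' then 1 else 0) ∧
        r = ‖blockCLM (fun (i : Fin n) (j : Fin n) =>
              ∑ x : X, ∑ a : A, (S x a i j) • U a x)‖}
    = sSup {r : ℝ | ∃ (ℍ 𝕂 : HilbertC.{u})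
        (T : A → X → (ℍ.carrier →L[ℂ] 𝕂.carrier)),
        ‖blockCLM T‖ ≤ 1 ∧
        r = ‖blockCLM (fun (i : Fin n) (j : Fin n) =>
              ∑ x : X, ∑ a : A, (S x a i j) • T a x)‖} :=
  statement6_general.{u} S
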